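/- Let s be an integer and let a, z > 0 be real numbers with a ≠ 1 and z ≠ 1. Then f_q(z, a q^{s}) tends to ((1 − z a)/((z − 1)(1 − a))) · z^{−s} as q tends to 0 from the right (q ranging over (0,1)). -/

import Mathlib

open Filter Topology

/-- The q-theta function
`θ_q(x) = (x^{1/2} - x^{-1/2}) ∏_{i=1}^∞ (1 - x q^i)(1 - x⁻¹ q^i)`. -/
noncomputable def qTheta (q x : ℝ) : ℝ :=
  (Real.sqrt x - (Real.sqrt x)⁻¹) *
    ∏' i : ℕ, (1 - x * q ^ (i + 1)) * (1 - x⁻¹ * q ^ (i + 1))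

/-- `f_q(z, a) = θ_q(a z) / (θ_q(a) θ_q(z))`. -/
noncomputable def fTheta (q z a : ℝ) : ℝ :=
  qTheta q (a * z) / (qTheta q a * qTheta q z)

/-!
Up to the factor `-x^{-1/2}`, `θ_q(x)` is the product `(x; q)_∞ (q/x; q)_∞`. Shifting the index of
the two products gives the quasi-periodicity `θ_q(q x) = -q^{-1/2} x⁻¹ θ_q(x)`, hence
`f_q(z, q a) = z⁻¹ f_q(z, a)`, which extracts the factor `z^{-s}` and reduces to `s = 0`. There
every `(x; q)_∞` is continuous at `q = 0`, so `θ_q(x) → (x - 1)/√x`.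
-/

section qPochhammer

variable {R : Type*} [NormedCommRing R]

/-- The infinite `q`-Pochhammer symbol `(x; q)_∞ = ∏_{i ≥ 0} (1 - x q^i)`, of which `θ_q` is a
product of two up to an elementary factor. It is meant for `‖q‖ < 1`, where the product
converges. -/
noncomputable def qPochhammerInf (x q : R) : R := ∏' i : ℕ, (1 - x * q ^ i)

lemma qPochhammerInf_zero_right (x : R) : qPochhammerInf x 0 = 1 - x := by
  rw [qPochhammerInf, tprod_eq_mulSingle 0 fun i hi ↦ by simp [hi], pow_zero, mul_one]

variable [NormOneClass R] [CompleteSpace R]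

lemma multipliable_one_sub_mul_pow (x : R) {q : R} (hq : ‖q‖ < 1) :
    Multipliable fun i : ℕ ↦ 1 - x * q ^ i := by
  have hsum : Summable fun i : ℕ ↦ ‖x‖ * ‖q‖ ^ i :=
    (summable_geometric_of_lt_one (norm_nonneg q) hq).mul_left _
  simpa only [sub_eq_add_neg] using multipliable_one_add_of_summable
    (hsum.of_nonneg_of_le (fun _ ↦ norm_nonneg _) fun i ↦ by
      grw [norm_neg, norm_mul_le, norm_pow_le])

lemma qPochhammerInf_eq_one_sub_mul (x : R) {q : R} (hq : ‖q‖ < 1) :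
    qPochhammerInf x q = (1 - x) * qPochhammerInf (q * x) q := by
  have hshift (i : ℕ) : 1 - x * q ^ (i + 1) = 1 - q * x * q ^ i := by ring
  have hmul : Multipliable fun i : ℕ ↦ 1 - x * q ^ (i + 1) := by
    simpa only [hshift] using multipliable_one_sub_mul_pow (q * x) hq
  rw [qPochhammerInf, tprod_eq_zero_mul' (f := fun i ↦ 1 - x * q ^ i) hmul, tprod_congr hshift,
    pow_zero, mul_one, qPochhammerInf]

lemma continuousAt_qPochhammerInf (x : R) {q : R} (hq : ‖q‖ < 1) :
    ContinuousAt (fun p : R × R ↦ qPochhammerInf p.1 p.2) (x, q) := by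
  obtain ⟨r, hqr, hr⟩ := exists_between hq
  have hr0 : 0 ≤ r := (norm_nonneg q).trans hqr.le
  simp only [ContinuousAt, qPochhammerInf, sub_eq_add_neg]
  refine tendsto_tprod_one_add_of_dominated_convergence
    (bound := fun i : ℕ ↦ (‖x‖ + 1) * r ^ i) ?_ (fun i ↦ ?_) ?_
  · exact (summable_geometric_of_lt_one hr0 hr).mul_left _
  · exact Continuous.tendsto (f := fun p : R × R ↦ -(p.1 * p.2 ^ i)) (by fun_prop) (x, q)
  · have hfst : ∀ᶠ p : R × R in 𝓝 (x, q), ‖p.1‖ < ‖x‖ + 1 :=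
      (continuous_fst.norm.tendsto (x, q)).eventually_lt_const (lt_add_one ‖x‖)
    have hsnd : ∀ᶠ p : R × R in 𝓝 (x, q), ‖p.2‖ < r :=
      (continuous_snd.norm.tendsto (x, q)).eventually_lt_const hqr
    filter_upwards [hfst, hsnd] with p hpx hpq i
    grw [norm_neg, norm_mul_le, norm_pow_le, hpx, hpq]

end qPochhammer

-- For `x ≤ 0` both sides are `0`, because `√x = 0` there.
lemma sqrt_sub_inv_sqrt (x : ℝ) : √x - (√x)⁻¹ = (x - 1) / √x := by
  rw [sub_div, Real.div_sqrt, one_div]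

section qTheta

variable {q : ℝ}

lemma qTheta_eq_qPochhammerInf (hq : |q| < 1) (x : ℝ) :
    qTheta q x = -(qPochhammerInf x q * qPochhammerInf (q * x⁻¹) q) / √x := by
  have hprod : ∏' i : ℕ, (1 - x * q ^ (i + 1)) * (1 - x⁻¹ * q ^ (i + 1)) =
      qPochhammerInf (q * x) q * qPochhammerInf (q * x⁻¹) q := by
    rw [qPochhammerInf, qPochhammerInf, ← (multipliable_one_sub_mul_pow _ hq).tprod_mul
      (multipliable_one_sub_mul_pow _ hq)]
    exact tprod_congr fun i ↦ by ring
  rw [qTheta, hprod, sqrt_sub_inv_sqrt, qPochhammerInf_eq_one_sub_mul x hq]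
  ring

lemma qTheta_mul_left (hq0 : 0 < q) (hq1 : q < 1) {x : ℝ} (hx : x ≠ 0) :
    qTheta q (q * x) = -(√q)⁻¹ * x⁻¹ * qTheta q x := by
  have hq : |q| < 1 := by rwa [abs_of_pos hq0]
  have hinv : q * (q * x)⁻¹ = x⁻¹ := by field_simp
  rw [qTheta_eq_qPochhammerInf hq, qTheta_eq_qPochhammerInf hq, hinv,
    qPochhammerInf_eq_one_sub_mul x hq, qPochhammerInf_eq_one_sub_mul x⁻¹ hq,
    Real.sqrt_mul hq0.le]
  field_simp
  ring

lemma tendsto_qTheta_zero (x : ℝ) :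
    Tendsto (fun q ↦ qTheta q x) (𝓝 0) (𝓝 ((x - 1) / √x)) := by
  have hlim (u : ℝ → ℝ) (hu : Continuous u) :
      Tendsto (fun q ↦ qPochhammerInf (u q) q) (𝓝 0) (𝓝 (1 - u 0)) := by
    rw [← qPochhammerInf_zero_right]
    exact (continuousAt_qPochhammerInf (u 0) (by simp)).tendsto.comp
      (hu.prodMk continuous_id).continuousAt
  have h := ((hlim (fun _ ↦ x) (by fun_prop)).mul
    (hlim (fun q ↦ q * x⁻¹) (by fun_prop))).neg.div_const √x
  simp only [zero_mul, sub_zero, mul_one, neg_sub] at h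
  have hsmall : ∀ᶠ q : ℝ in 𝓝 0, |q| < 1 :=
    (continuous_abs.tendsto (0 : ℝ)).eventually_lt_const (by simp)
  refine h.congr' ?_
  filter_upwards [hsmall] with q hq
  exact (qTheta_eq_qPochhammerInf hq x).symm

end qTheta

section fTheta

variable {a z : ℝ}

lemma fTheta_mul_left {q : ℝ} (hq0 : 0 < q) (hq1 : q < 1) (ha : a ≠ 0) (hz : z ≠ 0) :
    fTheta q z (q * a) = z⁻¹ * fTheta q z a := by
  have hfactor : -(√q)⁻¹ * a⁻¹ ≠ 0 := by
    simp [(Real.sqrt_pos.2 hq0).ne', ha]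
  calc fTheta q z (q * a)
      = (-(√q)⁻¹ * a⁻¹ * (z⁻¹ * qTheta q (a * z))) /
          (-(√q)⁻¹ * a⁻¹ * (qTheta q a * qTheta q z)) := by
        rw [fTheta, mul_assoc q a z, qTheta_mul_left hq0 hq1 ha,
          qTheta_mul_left hq0 hq1 (mul_ne_zero ha hz)]
        ring
    _ = z⁻¹ * fTheta q z a := by rw [mul_div_mul_left _ _ hfactor, mul_div_assoc, fTheta]

lemma fTheta_mul_zpow {q : ℝ} (hq0 : 0 < q) (hq1 : q < 1) (ha : a ≠ 0) (hz : z ≠ 0) (s : ℤ) :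
    fTheta q z (a * q ^ s) = fTheta q z a * z ^ (-s) := by
  have hper : Function.Periodic (fun t : ℤ ↦ fTheta q z (a * q ^ t) * z ^ t) 1 := fun t ↦ by
    have hshift : a * q ^ (t + 1) = q * (a * q ^ t) := by rw [zpow_add_one₀ hq0.ne']; ring
    have hat : a * q ^ t ≠ 0 := mul_ne_zero ha (zpow_ne_zero t hq0.ne')
    simp only [hshift, fTheta_mul_left hq0 hq1 hat hz, zpow_add_one₀ hz]
    field_simp
  have h : fTheta q z (a * q ^ s) * z ^ s = fTheta q z a := by simpa using hper.int_mul_eq s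
  rw [← h, mul_assoc, ← zpow_add₀ hz, add_neg_cancel, zpow_zero, mul_one]

lemma tendsto_fTheta_zero (ha : 0 < a) (hz : 0 < z) (ha1 : a ≠ 1) (hz1 : z ≠ 1) :
    Tendsto (fun q ↦ fTheta q z a) (𝓝 0) (𝓝 ((1 - z * a) / ((z - 1) * (1 - a)))) := by
  have hne {x : ℝ} (hx : 0 < x) (hx1 : x ≠ 1) : (x - 1) / √x ≠ 0 :=
    div_ne_zero (sub_ne_zero.2 hx1) (Real.sqrt_pos.2 hx).ne'
  have hval : (a * z - 1) / √(a * z) / ((a - 1) / √a * ((z - 1) / √z)) =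
      (1 - z * a) / ((z - 1) * (1 - a)) := by
    have ha_sub : a - 1 ≠ 0 := sub_ne_zero.2 ha1
    have hsub_a : 1 - a ≠ 0 := sub_ne_zero.2 ha1.symm
    have hz_sub : z - 1 ≠ 0 := sub_ne_zero.2 hz1
    rw [Real.sqrt_mul ha.le]
    field_simp
    ring
  rw [← hval]
  exact (tendsto_qTheta_zero (a * z)).div
    ((tendsto_qTheta_zero a).mul (tendsto_qTheta_zero z)) (mul_ne_zero (hne ha ha1) (hne hz hz1))

end fTheta

/-- For an integer `s` and reals `a, z > 0` with `a ≠ 1` and `z ≠ 1`,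
`f_q(z, a q^s) → ((1 - z a)/((z - 1)(1 - a))) z^{-s}` as `q → 0⁺`,
with `q` ranging over `(0,1)`. -/
theorem fTheta_limit_integral_kahler (s : ℤ) (a z : ℝ) (ha : 0 < a) (hz : 0 < z)
    (ha1 : a ≠ 1) (hz1 : z ≠ 1) :
    Tendsto (fun q : ℝ => fTheta q z (a * q ^ s))
      (𝓝[Set.Ioo (0:ℝ) 1] 0)
      (𝓝 ((1 - z * a) / ((z - 1) * (1 - a)) * z ^ (-s))) := by
  refine (((tendsto_fTheta_zero ha hz ha1 hz1).mono_left nhdsWithin_le_nhds).mul_const _).congr' ?_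
  filter_upwards [self_mem_nhdsWithin] with q hq
  exact (fTheta_mul_zpow hq.1 hq.2 ha.ne' hz.ne' s).symm
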